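/- If f : ℕ → ℂ is an MO function, then the partial sums satisfy ∑_{n ≤ x} f(n) = Ω(1/(x log x)); that is, it is NOT the case that there exists a constant C such that |∑_{n ≤ x} f(n)| ≤ C/(x log x) for all sufficiently large x. -/

import Mathlib

open Filter Finset

/-- `f` is a multiplicative arithmetical function: `f 1 = 1` and
`f (m*n) = f m * f n` whenever `gcd m n = 1`. -/
def IsMultFn (f : ℕ → ℂ) : Prop :=
  f 1 = 1 ∧ ∀ m n : ℕ, Nat.Coprime m n → f (m * n) = f m * f n

/-- The series `∑_{k=0}^∞ g k` converges (in the sense of partial sums) to `L`. -/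
def SeriesTendsTo (g : ℕ → ℂ) (L : ℂ) : Prop :=
  Filter.Tendsto (fun N => ∑ k ∈ Finset.range N, g k) Filter.atTop (nhds L)

/-- `f` is an MO function: multiplicative, `∑_{n=1}^∞ f n = 0`, and for each prime `p`
the series `∑_{k=0}^∞ f (p^k)` converges to a nonzero value. -/
def IsMO (f : ℕ → ℂ) : Prop :=
  IsMultFn f ∧ SeriesTendsTo (fun n => f (n + 1)) 0 ∧
    ∀ p : ℕ, p.Prime → ∃ L : ℂ, L ≠ 0 ∧ SeriesTendsTo (fun k => f (p ^ k)) L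

/-!
Suppose `∑_{n ≤ x} f n = O(1 / (x (log x)^a))` with `a > 0`. Differencing gives the same bound for
`f n` itself. The series `∑ 1 / (n (log n)^a)` may diverge, but Chebyshev's bound on dyadic blocks
shows that it converges over the primes, hence over the prime powers. A multiplicative function that
is absolutely summable over the prime powers is absolutely summable, and its Euler product converges
absolutely, so its sum is nonzero once no local factor vanishes. The bound, however, forces the sum
to be zero.
-/

section PrimeSums

theorem summable_of_sum_Ico_le {f g : ℕ → ℝ} {u : ℕ → ℕ} (hu : StrictMono u)
    (hf : ∀ n, 0 ≤ f n) (hg : Summable g)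
    (hfg : ∀ j, ∑ n ∈ Ico (u j) (u (j + 1)), f n ≤ g j) : Summable f := by
  have sum_le (J : ℕ) : ∑ n ∈ Ico (u 0) (u J), f n ≤ ∑ j ∈ range J, g j := by
    induction J with
    | zero => simp
    | succ J ih =>
      rw [sum_range_succ, ← sum_Ico_consecutive _ (hu.monotone J.zero_le) (hu.monotone J.le_succ)]
      exact add_le_add ih (hfg J)
  have g_nonneg (j : ℕ) : 0 ≤ g j := (sum_nonneg fun n _ ↦ hf n).trans (hfg j)
  refine summable_of_sum_range_le (c := ∑ n ∈ range (u 0), f n + ∑' j, g j) hf fun J ↦ ?_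
  calc ∑ n ∈ range J, f n
      ≤ ∑ n ∈ range (u J), f n :=
        sum_le_sum_of_subset_of_nonneg (range_subset_range.2 hu.le_apply) fun n _ _ ↦ hf n
    _ = ∑ n ∈ range (u 0), f n + ∑ n ∈ Ico (u 0) (u J), f n :=
        (sum_range_add_sum_Ico _ (hu.monotone J.zero_le)).symm
    _ ≤ ∑ n ∈ range (u 0), f n + ∑' j, g j := by
        gcongr
        exact (sum_le J).trans (hg.sum_le_tsum _ fun j _ ↦ g_nonneg j)

theorem sum_log_primes_Ico_le (m n : ℕ) :
    ∑ p ∈ Ico m n with p.Prime, Real.log p ≤ Real.log 4 * n := by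
  refine le_trans ?_ (Chebyshev.theta_le_log4_mul_x n.cast_nonneg)
  rw [Chebyshev.theta_eq_sum_Icc, Nat.floor_natCast]
  refine sum_le_sum_of_subset_of_nonneg (filter_subset_filter _ fun k hk ↦ ?_)
    fun p _ _ ↦ Real.log_natCast_nonneg p
  exact mem_Icc.2 ⟨k.zero_le, (mem_Ico.1 hk).2.le⟩

theorem sum_primes_Ico_inv_mul_log_rpow_le {a : ℝ} (ha : 0 ≤ 1 + a) {m : ℕ} (hm : 1 < m) (n : ℕ) :
    ∑ p ∈ Ico m n with p.Prime, ((p : ℝ) * Real.log p ^ a)⁻¹ ≤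
      Real.log 4 * n / (m * Real.log m ^ (1 + a)) := by
  have log_m_pos : 0 < Real.log m := Real.log_pos (mod_cast hm)
  have m_pos : (0 : ℝ) < m := mod_cast zero_lt_one.trans hm
  have term_le (p : ℕ) (hp : m ≤ p) :
      ((p : ℝ) * Real.log p ^ a)⁻¹ ≤ Real.log p / (m * Real.log m ^ (1 + a)) := by
    have m_le : (m : ℝ) ≤ p := mod_cast hp
    have log_le : Real.log m ≤ Real.log p := Real.log_le_log m_pos m_le
    have p_pos : (0 : ℝ) < p := m_pos.trans_le m_le
    have log_p_pos : 0 < Real.log p := log_m_pos.trans_le log_le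
    calc ((p : ℝ) * Real.log p ^ a)⁻¹
        = Real.log p / (p * Real.log p ^ (1 + a)) := by
          rw [Real.rpow_add log_p_pos, Real.rpow_one]
          field_simp
      _ ≤ Real.log p / (m * Real.log m ^ (1 + a)) := by gcongr
  calc ∑ p ∈ Ico m n with p.Prime, ((p : ℝ) * Real.log p ^ a)⁻¹
      ≤ ∑ p ∈ Ico m n with p.Prime, Real.log p / (m * Real.log m ^ (1 + a)) :=
        sum_le_sum fun p hp ↦ term_le p (mem_Ico.1 (mem_filter.1 hp).1).1
    _ = (∑ p ∈ Ico m n with p.Prime, Real.log p) / (m * Real.log m ^ (1 + a)) := (sum_div ..).symm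
    _ ≤ Real.log 4 * n / (m * Real.log m ^ (1 + a)) := by
        gcongr
        exact sum_log_primes_Ico_le m n

theorem summable_primes_inv_mul_log_rpow {a : ℝ} (ha : 0 < a) :
    Summable fun p : Nat.Primes ↦ ((p : ℝ) * Real.log p ^ a)⁻¹ := by
  have log_nonneg (n : ℕ) : 0 ≤ Real.log n := Real.log_natCast_nonneg n
  have log_two_pos : 0 < Real.log 2 := Real.log_pos one_lt_two
  set C : ℝ := 2 * Real.log 4 / Real.log 2 ^ (1 + a) with hC
  have dyadic_summable : Summable fun j : ℕ ↦ C * ((j : ℝ) ^ (1 + a))⁻¹ :=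
    (Real.summable_nat_rpow_inv.2 (by linarith)).mul_left C
  refine (summable_subtype_iff_indicator (s := {p : ℕ | p.Prime})
    (f := fun n : ℕ ↦ ((n : ℝ) * Real.log n ^ a)⁻¹)).2 <|
    summable_of_sum_Ico_le (pow_right_strictMono₀ one_lt_two)
      (Set.indicator_nonneg fun n _ ↦ by have := log_nonneg n; positivity)
      dyadic_summable fun j ↦ ?_
  simp only [Set.indicator_apply, Set.mem_ofPred_eq, ← sum_filter]
  obtain rfl | hj := j.eq_zero_or_pos
  · have no_primes : {p ∈ Ico (2 ^ 0) (2 ^ (0 + 1)) | p.Prime} = ∅ := by decide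
    rw [no_primes, sum_empty]
    positivity
  refine (sum_primes_Ico_inv_mul_log_rpow_le (by linarith)
    (Nat.one_lt_two_pow hj.ne') (2 ^ (j + 1))).trans_eq ?_
  push_cast
  rw [Real.log_pow, Real.mul_rpow j.cast_nonneg log_two_pos.le, hC]
  field_simp
  ring

theorem summable_primePow_inv_mul_log_rpow {a : ℝ} (ha : 0 < a) :
    Summable fun q : Nat.Primes × ℕ ↦
      (((q.1 ^ (q.2 + 1) : ℕ) : ℝ) * Real.log (q.1 ^ (q.2 + 1) : ℕ) ^ a)⁻¹ := by
  have geom : Summable fun k : ℕ ↦ ((2 : ℝ) ^ k)⁻¹ := by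
    simpa only [one_div, inv_pow] using summable_geometric_two
  have log_nonneg (n : ℕ) := Real.log_natCast_nonneg n
  refine ((summable_primes_inv_mul_log_rpow ha).mul_of_nonneg geom
    (fun p ↦ by have := log_nonneg p; positivity) fun k ↦ by positivity).of_nonneg_of_le
    (fun q ↦ by have := log_nonneg (q.1 ^ (q.2 + 1)); positivity) ?_
  rintro ⟨p, k⟩
  have two_le : (2 : ℝ) ≤ p := mod_cast p.2.two_le
  have log_pos : 0 < Real.log p := Real.log_pos (by linarith)
  have log_le : Real.log p ≤ Real.log (p ^ (k + 1) : ℕ) :=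
    Real.log_le_log (by linarith) (mod_cast Nat.le_self_pow k.succ_ne_zero p)
  rw [← mul_inv]
  refine inv_anti₀ (by positivity) ?_
  calc (p : ℝ) * Real.log p ^ a * 2 ^ k
      ≤ p * Real.log (p ^ (k + 1) : ℕ) ^ a * p ^ k := by gcongr
    _ = (p ^ (k + 1) : ℕ) * Real.log (p ^ (k + 1) : ℕ) ^ a := by push_cast; ring

end PrimeSums

section Asymptotics

open Asymptotics Topology

theorem isBigO_of_sum_Icc_isBigO {E F : Type*} [SeminormedAddCommGroup E]
    [SeminormedAddCommGroup F] {f : ℕ → E} {g : ℕ → F}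
    (hf : (fun N ↦ ∑ n ∈ Icc 1 N, f n) =O[atTop] g) (hg : g =O[atTop] fun n ↦ g (n + 1)) :
    f =O[atTop] g := by
  rw [← map_add_atTop_eq_nat 1, isBigO_map]
  have hf_succ : (fun N ↦ ∑ n ∈ Icc 1 (N + 1), f n) =O[atTop] fun N ↦ g (N + 1) :=
    hf.comp_tendsto (tendsto_add_atTop_nat 1)
  refine (hf_succ.sub (hf.trans hg)).congr_left fun N ↦ ?_
  rw [sum_Icc_succ_top (by lia), add_sub_cancel_left, Function.comp_apply]

theorem isBigO_inv_mul_log_rpow_succ (a : ℝ) :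
    (fun n : ℕ ↦ ((n : ℝ) * Real.log n ^ a)⁻¹) =O[atTop]
      fun n : ℕ ↦ (((n + 1 : ℕ) : ℝ) * Real.log (n + 1 : ℕ) ^ a)⁻¹ := by
  have succ_equiv : (fun n : ℕ ↦ ((n + 1 : ℕ) : ℝ)) ~[atTop] fun n : ℕ ↦ (n : ℝ) := by
    simp only [Nat.cast_add_one]
    exact IsEquivalent.refl.add_isLittleO
      (isLittleO_const_left.2 (Or.inr (tendsto_norm_atTop_atTop.comp tendsto_natCast_atTop_atTop)))
  have log_equiv := succ_equiv.log tendsto_natCast_atTop_atTop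
  have rpow_equiv := log_equiv.rpow (r := a) fun n ↦ Real.log_natCast_nonneg n
  exact (succ_equiv.mul rpow_equiv).inv.isBigO_symm

theorem tendsto_inv_mul_log_rpow_atTop {a : ℝ} (ha : 0 < a) :
    Tendsto (fun x : ℝ ↦ (x * Real.log x ^ a)⁻¹) atTop (𝓝 0) :=
  tendsto_inv_atTop_zero.comp <|
    tendsto_id.atTop_mul_atTop₀ ((tendsto_rpow_atTop ha).comp Real.tendsto_log_atTop)

end Asymptotics

section EulerProduct

variable {R : Type*} [NormedCommRing R] [NormOneClass R] [NormMulClass R]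
  {f : ArithmeticFunction R}

theorem sum_range_norm_le_prod_primesBelow (hf : f.IsMultiplicative)
    (h_local : ∀ {p : ℕ}, p.Prime → Summable fun k ↦ ‖f (p ^ k)‖) (N : ℕ) :
    ∑ n ∈ range N, ‖f n‖ ≤ ∏ p ∈ N.primesBelow, ∑' k, ‖f (p ^ k)‖ := by
  have smooth_hasSum := (EulerProduct.summable_and_hasSum_smoothNumbers_prod_primesBelow_tsum
    (f := (‖f ·‖)) (by simp [hf.1]) (fun hmn ↦ by simp [hf.2 hmn])
    (fun hp ↦ by simpa using h_local hp) N).2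
  have indicator_nonneg (n : ℕ) : 0 ≤ Set.indicator N.smoothNumbers (‖f ·‖) n :=
    Set.indicator_nonneg (fun _ _ ↦ norm_nonneg _) n
  have le_indicator (n : ℕ) (hn : n ∈ range N) :
      ‖f n‖ ≤ Set.indicator N.smoothNumbers (‖f ·‖) n := by
    obtain rfl | hn0 := n.eq_zero_or_pos
    · rw [f.map_zero, norm_zero]
      exact indicator_nonneg 0
    · rw [Set.indicator_of_mem (Nat.mem_smoothNumbers_of_lt hn0 (mem_range.1 hn))]
  exact (sum_le_sum le_indicator).trans <|
    sum_le_hasSum (range N) (fun n _ ↦ indicator_nonneg n)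
      (hasSum_subtype_iff_indicator (f := (‖f ·‖)).1 smooth_hasSum)

theorem summable_norm_of_summable_norm_primePow (hf : f.IsMultiplicative)
    (h : Summable fun q : Nat.Primes × ℕ ↦ ‖f (q.1 ^ (q.2 + 1))‖) : Summable (‖f ·‖) := by
  obtain ⟨h_fiber, h_tail⟩ := (summable_prod_of_nonneg fun _ ↦ norm_nonneg _).1 h
  have h_local {p : ℕ} (hp : p.Prime) : Summable fun k ↦ ‖f (p ^ k)‖ :=
    (summable_nat_add_iff (f := fun k ↦ ‖f (p ^ k)‖) 1).1 (h_fiber ⟨p, hp⟩)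
  set t : ℕ → ℝ := fun p ↦ ∑' k, ‖f (p ^ (k + 1))‖
  have t_nonneg (p : ℕ) : 0 ≤ t p := tsum_nonneg fun _ ↦ norm_nonneg _
  have sum_t_le (N : ℕ) : ∑ p ∈ N.primesBelow, t p ≤ ∑' p : Nat.Primes, t p := by
    rw [← sum_subtype_of_mem t fun p hp ↦ Nat.prime_of_mem_primesBelow hp]
    exact sum_le_hasSum (ι := Nat.Primes) _ (fun p _ ↦ t_nonneg p) h_tail.hasSum
  refine summable_of_sum_range_le (c := Real.exp (∑' p : Nat.Primes, t p))
    (fun _ ↦ norm_nonneg _) fun N ↦ ?_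
  calc ∑ n ∈ range N, ‖f n‖
      ≤ ∏ p ∈ N.primesBelow, ∑' k, ‖f (p ^ k)‖ := sum_range_norm_le_prod_primesBelow hf h_local N
    _ = ∏ p ∈ N.primesBelow, (1 + t p) := prod_congr rfl fun p hp ↦ by
        rw [(h_local (Nat.prime_of_mem_primesBelow hp)).tsum_eq_zero_add, pow_zero, hf.1, norm_one]
    _ ≤ Real.exp (∑ p ∈ N.primesBelow, t p) := Real.prod_one_add_le_exp_sum _ t_nonneg
    _ ≤ Real.exp (∑' p : Nat.Primes, t p) := Real.exp_le_exp.2 (sum_t_le N)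

theorem tsum_ne_zero_of_summable_norm_primePow [CompleteSpace R] (hf : f.IsMultiplicative)
    (h : Summable fun q : Nat.Primes × ℕ ↦ ‖f (q.1 ^ (q.2 + 1))‖)
    (h_local : ∀ p : Nat.Primes, ∑' k, f (p ^ k) ≠ 0) : ∑' n, f n ≠ 0 := by
  obtain ⟨h_fiber, h_tail⟩ := (summable_prod_of_nonneg fun _ ↦ norm_nonneg _).1 h
  have local_eq (p : Nat.Primes) : ∑' k, f (p ^ k) = 1 + ∑' k, f (p ^ (k + 1)) := by
    have local_summable : Summable fun k ↦ f (p ^ k) :=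
      (summable_nat_add_iff 1).1 (h_fiber p).of_norm
    rw [local_summable.tsum_eq_zero_add, pow_zero, hf.1]
  rw [← hf.eulerProduct_tprod (summable_norm_of_summable_norm_primePow hf h)]
  simp only [local_eq] at h_local ⊢
  exact tprod_one_add_ne_zero_of_summable h_local <|
    h_tail.of_nonneg_of_le (fun _ ↦ norm_nonneg _) fun p ↦ norm_tsum_le_tsum_norm (h_fiber p)

end EulerProduct

section MultiplicativeFunctions

open Asymptotics

theorem toArithmeticFunction_apply {R : Type*} [Zero R] (f : ℕ → R) {n : ℕ} (hn : n ≠ 0) :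
    toArithmeticFunction f n = f n := if_neg hn

theorem IsMultFn.isMultiplicative {f : ℕ → ℂ} (hf : IsMultFn f) :
    (toArithmeticFunction f).IsMultiplicative := by
  refine ArithmeticFunction.IsMultiplicative.iff_ne_zero.2
    ⟨(toArithmeticFunction_apply f one_ne_zero).trans hf.1, fun hm hn hmn ↦ ?_⟩
  simp only [toArithmeticFunction_apply, hm, hn, mul_ne_zero, ne_eq, not_false_eq_true,
    hf.2 _ _ hmn]

theorem sum_range_succ_toArithmeticFunction {R : Type*} [AddCommMonoid R] (f : ℕ → R) (N : ℕ) :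
    ∑ n ∈ range (N + 1), toArithmeticFunction f n = ∑ n ∈ Icc 1 N, f n := by
  rw [range_eq_Ico, sum_eq_sum_Ico_succ_bot N.succ_pos, ArithmeticFunction.map_zero, zero_add]
  exact sum_congr rfl fun n hn ↦ toArithmeticFunction_apply f (by grind)

theorem IsMultFn.not_tendsto_sum_zero {f : ℕ → ℂ} (hf : IsMultFn f)
    (h : Summable fun q : Nat.Primes × ℕ ↦ ‖f (q.1 ^ (q.2 + 1))‖)
    (h_local : ∀ p : ℕ, p.Prime → ¬ SeriesTendsTo (fun k ↦ f (p ^ k)) 0) :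
    ¬ Tendsto (fun N ↦ ∑ n ∈ Icc 1 N, f n) atTop (nhds 0) := by
  set F := toArithmeticFunction f
  have F_pow (p : Nat.Primes) (k : ℕ) : F (p ^ k) = f (p ^ k) :=
    toArithmeticFunction_apply f (pow_ne_zero k p.2.ne_zero)
  have h_F : Summable fun q : Nat.Primes × ℕ ↦ ‖F (q.1 ^ (q.2 + 1))‖ := by simpa only [F_pow]
  have F_summable : Summable F :=
    (summable_norm_of_summable_norm_primePow hf.isMultiplicative h_F).of_norm
  have local_ne_zero (p : Nat.Primes) : ∑' k, F (p ^ k) ≠ 0 := fun h_zero ↦ by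
    have local_summable := F_summable.comp_injective (Nat.pow_right_injective p.2.two_le)
    have local_hasSum : HasSum (fun k ↦ F (p ^ k)) 0 := h_zero ▸ local_summable.hasSum
    simp only [F_pow] at local_hasSum
    exact h_local p p.2 local_hasSum.tendsto_sum_nat
  have tendsto_tsum := (tendsto_add_atTop_iff_nat 1).2 F_summable.hasSum.tendsto_sum_nat
  simp only [F, sum_range_succ_toArithmeticFunction] at tendsto_tsum
  exact fun h_zero ↦ tsum_ne_zero_of_summable_norm_primePow hf.isMultiplicative h_F local_ne_zero
    (tendsto_nhds_unique tendsto_tsum h_zero)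

theorem summable_norm_primePow_of_isBigO {E : Type*} [SeminormedAddCommGroup E] {f : ℕ → E}
    {a : ℝ} (ha : 0 < a) (hf : f =O[atTop] fun n : ℕ ↦ ((n : ℝ) * Real.log n ^ a)⁻¹) :
    Summable fun q : Nat.Primes × ℕ ↦ ‖f (q.1 ^ (q.2 + 1))‖ := by
  have primePow_injective : Function.Injective fun q : Nat.Primes × ℕ ↦ (q.1 : ℕ) ^ (q.2 + 1) :=
    Subtype.val_injective.comp Nat.Primes.prodNatEquiv.injective
  rw [← Nat.cofinite_eq_atTop] at hf
  exact summable_of_isBigO (summable_primePow_inv_mul_log_rpow ha)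
    (hf.comp_tendsto primePow_injective.tendsto_cofinite).norm_left

end MultiplicativeFunctions

theorem stmt4_general (f : ℕ → ℂ) (hf : IsMultFn f)
    (h_local : ∀ p : ℕ, p.Prime → ¬ SeriesTendsTo (fun k ↦ f (p ^ k)) 0) {a : ℝ} (ha : 0 < a) :
    ¬ ∃ C : ℝ, ∀ᶠ x : ℝ in Filter.atTop,
      ‖∑ n ∈ Finset.Icc 1 ⌊x⌋₊, f n‖ ≤ C / (x * Real.log x ^ a) := by
  rintro ⟨C, hC⟩
  have sum_isBigO : (fun N ↦ ∑ n ∈ Icc 1 N, f n) =O[atTop]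
      fun N : ℕ ↦ ((N : ℝ) * Real.log N ^ a)⁻¹ := by
    refine .of_bound |C| ?_
    filter_upwards [tendsto_natCast_atTop_atTop.eventually hC] with N hN
    rw [Nat.floor_natCast, div_eq_mul_inv] at hN
    exact hN.trans ((le_abs_self _).trans_eq (abs_mul _ _))
  have f_isBigO := isBigO_of_sum_Icc_isBigO sum_isBigO (isBigO_inv_mul_log_rpow_succ a)
  exact hf.not_tendsto_sum_zero (summable_norm_primePow_of_isBigO ha f_isBigO) h_local <|
    sum_isBigO.trans_tendsto
      ((tendsto_inv_mul_log_rpow_atTop ha).comp tendsto_natCast_atTop_atTop)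

theorem stmt4 (f : ℕ → ℂ) (hf : IsMO f) :
    ¬ ∃ C : ℝ, ∀ᶠ x : ℝ in Filter.atTop,
      ‖∑ n ∈ Finset.Icc 1 ⌊x⌋₊, f n‖ ≤ C / (x * Real.log x) := by
  obtain ⟨h_mult, -, h_local⟩ := hf
  simpa only [Real.rpow_one] using stmt4_general f h_mult (fun p hp h_zero ↦
    (h_local p hp).elim fun L hL ↦ hL.1 (tendsto_nhds_unique hL.2 h_zero)) one_pos
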